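/- arXiv:1503.05444 — 2 statements merged into one kernel-verified Lean document; each statement's English description precedes it below -/
import Mathlib

section
/- Let f : ℝ → ℝ be a smooth function, and define the operators (xD)f(x) = x·f′(x) and M̂f(x) = x·f(x) + x·f′(x). Then for every nonnegative integer n and every x ∈ ℝ, (M̂ⁿ f)(x) = Σ_{k=0}^{n} C(n,k) · φ_{n−k}(x) · ((xD)^k f)(x), where M̂ⁿ and (xD)^k denote n-fold and k-fold iteration of the respective operators. -/
/-- Stirling numbers of the second kind. -/
def stirling2 : ℕ → ℕ → ℕ
  | 0, 0 => 1
  | 0, _ + 1 => 0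
  | _ + 1, 0 => 0
  | n + 1, k + 1 => (k + 1) * stirling2 n (k + 1) + stirling2 n k

/-- The exponential polynomials φₙ(x) = Σ_{k=0}^{n} S(n,k) xᵏ. -/
noncomputable def expPoly (n : ℕ) (x : ℝ) : ℝ :=
  ∑ k ∈ Finset.range (n + 1), (stirling2 n k : ℝ) * x ^ k

/-- The operator (xD)f(x) = x·f′(x). -/
noncomputable def xD (f : ℝ → ℝ) : ℝ → ℝ := fun x => x * deriv f x

/-- The operator M̂f(x) = x·f(x) + x·f′(x). -/
noncomputable def Mhat (f : ℝ → ℝ) : ℝ → ℝ := fun x => x * f x + x * deriv f x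

/-!
`Mhat` is `xD` conjugated by the exponential: `Mhat f = e⁻ˣ (xD) (eˣ f)`. Hence it satisfies the
twisted product rule `Mhat (g * f) = Mhat g * f + g * xD f`, which iterates to a Leibniz formula for
`Mhatⁿ (g * f)`. Since `Mhat φₙ = φₙ₊₁` and `φ₀ = 1`, we have `φₙ = Mhatⁿ 1`, so the theorem is the
Leibniz formula at `g = 1`.
-/

theorem stirling2_eq_stirlingSecond (n k : ℕ) : stirling2 n k = Nat.stirlingSecond n k := by
  induction n generalizing k with
  | zero => cases k <;> rfl
  | succ n ih =>
    cases k with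
    | zero => rfl
    | succ k => rw [stirling2, Nat.stirlingSecond_succ_succ, ih, ih]

theorem stirling2_eq_zero_of_lt {n k : ℕ} (h : n < k) : stirling2 n k = 0 := by
  rw [stirling2_eq_stirlingSecond, Nat.stirlingSecond_eq_zero_of_lt h]

section Operators

variable {f g : ℝ → ℝ}

theorem Mhat_add (hf : Differentiable ℝ f) (hg : Differentiable ℝ g) :
    Mhat (f + g) = Mhat f + Mhat g := by
  funext x
  simp only [Mhat, Pi.add_apply, deriv_add (hf x) (hg x)]
  ring

theorem Mhat_mul (hg : Differentiable ℝ g) (hf : Differentiable ℝ f) :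
    Mhat (g * f) = Mhat g * f + g * xD f := by
  funext x
  simp only [Mhat, xD, Pi.add_apply, Pi.mul_apply, deriv_mul (hg x) (hf x)]
  ring

theorem contDiff_xD {m : WithTop ℕ∞} (hf : ContDiff ℝ (m + 1) f) : ContDiff ℝ m (xD f) :=
  contDiff_id.mul hf.deriv'

theorem contDiff_Mhat {m : WithTop ℕ∞} (hf : ContDiff ℝ (m + 1) f) : ContDiff ℝ m (Mhat f) :=
  (contDiff_id.mul (hf.of_le le_self_add)).add (contDiff_xD hf)

theorem Mhat_iterate_add {n : ℕ} (hf : ContDiff ℝ n f) (hg : ContDiff ℝ n g) :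
    Mhat^[n] (f + g) = Mhat^[n] f + Mhat^[n] g := by
  induction n generalizing f g with
  | zero => rfl
  | succ n ih =>
    rw [Nat.cast_succ] at hf hg
    simp only [Function.iterate_succ_apply]
    rw [Mhat_add (hf.differentiable (by simp)) (hg.differentiable (by simp)),
      ih (contDiff_Mhat hf) (contDiff_Mhat hg)]

theorem Mhat_iterate_mul {n : ℕ} (hg : ContDiff ℝ n g) (hf : ContDiff ℝ n f) :
    Mhat^[n] (g * f) =
      ∑ k ∈ Finset.range (n + 1), (n.choose k : ℝ → ℝ) * (Mhat^[n - k] g * xD^[k] f) := by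
  induction n generalizing f g with
  | zero => simp
  | succ n ih =>
    rw [Nat.cast_succ] at hf hg
    have hf' : ContDiff ℝ n f := hf.of_le le_self_add
    have hg' : ContDiff ℝ n g := hg.of_le le_self_add
    have hMg : ContDiff ℝ n (Mhat g) := contDiff_Mhat hg
    have hDf : ContDiff ℝ n (xD f) := contDiff_xD hf
    calc Mhat^[n + 1] (g * f)
        = Mhat^[n] (Mhat g * f + g * xD f) := by
          rw [Function.iterate_succ_apply,
            Mhat_mul (hg.differentiable (by simp)) (hf.differentiable (by simp))]
      _ = Mhat^[n] (Mhat g * f) + Mhat^[n] (g * xD f) :=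
          Mhat_iterate_add (hMg.mul hf') (hg'.mul hDf)
      _ = ∑ k ∈ Finset.range (n + 1), (n.choose k : ℝ → ℝ) * (Mhat^[n + 1 - k] g * xD^[k] f) +
            ∑ k ∈ Finset.range (n + 1), (n.choose k : ℝ → ℝ) * (Mhat^[n - k] g * xD^[k + 1] f) := by
          rw [ih hMg hf', ih hg' hDf]
          congr 1
          refine Finset.sum_congr rfl fun k hk => ?_
          rw [Nat.sub_add_comm (Finset.mem_range_succ_iff.1 hk), Function.iterate_succ_apply]
      _ = _ := (Finset.sum_choose_succ_mul (fun k m => Mhat^[m] g * xD^[k] f) n).symm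

end Operators

theorem expPoly_zero : expPoly 0 = 1 := by
  funext x
  simp [expPoly, stirling2]

theorem xD_expPoly (n : ℕ) (x : ℝ) :
    xD (expPoly n) x = ∑ k ∈ Finset.range (n + 1), (k : ℝ) * stirling2 n k * x ^ k := by
  have hderiv : HasDerivAt (expPoly n)
      (∑ k ∈ Finset.range (n + 1), (stirling2 n k : ℝ) * (k * x ^ (k - 1))) x :=
    HasDerivAt.fun_sum fun k _ => (hasDerivAt_pow k x).const_mul _
  rw [xD, hderiv.deriv, Finset.mul_sum]
  refine Finset.sum_congr rfl fun k _ => ?_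
  cases k with
  | zero => simp
  | succ k =>
    rw [Nat.add_sub_cancel]
    ring

theorem expPoly_succ (n : ℕ) : expPoly (n + 1) = Mhat (expPoly n) := by
  funext x
  have hshift : ∑ k ∈ Finset.range (n + 1), ((k + 1 : ℕ) : ℝ) * stirling2 n (k + 1) * x ^ (k + 1) =
      xD (expPoly n) x := by
    have h := Finset.sum_range_succ' (fun k => (k : ℝ) * stirling2 n k * x ^ k) (n + 1)
    rw [Finset.sum_range_succ, ← xD_expPoly, stirling2_eq_zero_of_lt n.lt_succ_self] at h
    simpa using h.symm
  calc expPoly (n + 1) x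
      = ∑ k ∈ Finset.range (n + 1), (stirling2 (n + 1) (k + 1) : ℝ) * x ^ (k + 1) := by
        rw [expPoly, Finset.sum_range_succ']
        simp [stirling2]
    _ = ∑ k ∈ Finset.range (n + 1), (x * (stirling2 n k * x ^ k) +
          ((k + 1 : ℕ) : ℝ) * stirling2 n (k + 1) * x ^ (k + 1)) := by
        refine Finset.sum_congr rfl fun k _ => ?_
        rw [stirling2]
        push_cast
        ring
    _ = x * expPoly n x + xD (expPoly n) x := by
        rw [Finset.sum_add_distrib, hshift, ← Finset.mul_sum, expPoly]

theorem expPoly_eq_Mhat_iterate (n : ℕ) : expPoly n = Mhat^[n] 1 := by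
  induction n with
  | zero => exact expPoly_zero
  | succ n ih => rw [expPoly_succ, ih, Function.iterate_succ_apply']

theorem stmt0_general (f : ℝ → ℝ) (n : ℕ) (hf : ContDiff ℝ n f) (x : ℝ) :
    (Mhat^[n] f) x =
      ∑ k ∈ Finset.range (n + 1),
        (n.choose k : ℝ) * expPoly (n - k) x * (xD^[k] f) x := by
  have hleibniz := congrFun (Mhat_iterate_mul (g := 1) contDiff_const hf) x
  simpa only [one_mul, ← expPoly_eq_Mhat_iterate, Finset.sum_apply, Pi.mul_apply, Pi.natCast_apply,
    ← mul_assoc] using hleibniz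

theorem stmt0 (f : ℝ → ℝ) (hf : ContDiff ℝ (⊤ : ℕ∞) f) (n : ℕ) (x : ℝ) :
    (Mhat^[n] f) x =
      ∑ k ∈ Finset.range (n + 1),
        (n.choose k : ℝ) * expPoly (n - k) x * (xD^[k] f) x :=
  stmt0_general f n (hf.of_le (mod_cast le_top)) x
end

section
/- For every real α > 0, every nonnegative integer n, and every x ∈ ℝ, w_n^{(α)}(x) = (1/Γ(α)) · ∫_{0}^{∞} λ^{α−1} e^{−λ} φ_n(xλ) dλ. -/
/-- Generalized binomial coefficient C(α+k−1,k) = α(α+1)⋯(α+k−1)/k!. -/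
noncomputable def gbinom (α : ℝ) (k : ℕ) : ℝ :=
  Polynomial.eval α (ascPochhammer ℝ k) / (k.factorial : ℝ)

/-- The general geometric polynomials w_n^{(α)}(x). -/
noncomputable def geomPoly (α : ℝ) (n : ℕ) (x : ℝ) : ℝ :=
  ∑ k ∈ Finset.range (n + 1), (stirling2 n k : ℝ) * gbinom α k * (k.factorial : ℝ) * x ^ k

open MeasureTheory Set

theorem gbinom_mul_factorial (α : ℝ) (k : ℕ) :
    gbinom α k * (k.factorial : ℝ) = (ascPochhammer ℝ k).eval α :=
  div_mul_cancel₀ _ (Nat.cast_ne_zero.mpr k.factorial_ne_zero)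

theorem geomPoly_eq_sum_ascPochhammer (α : ℝ) (n : ℕ) (x : ℝ) :
    geomPoly α n x =
      ∑ k ∈ Finset.range (n + 1), (stirling2 n k : ℝ) * x ^ k * (ascPochhammer ℝ k).eval α := by
  refine Finset.sum_congr rfl fun k _ => ?_
  rw [mul_assoc (stirling2 n k : ℝ), gbinom_mul_factorial, mul_right_comm]

theorem gamma_add_natCast {α : ℝ} (hα : ∀ m : ℕ, α ≠ -m) (k : ℕ) :
    Real.Gamma (α + k) = (ascPochhammer ℝ k).eval α * Real.Gamma α := by
  induction k with
  | zero => simp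
  | succ k ih =>
    have hk : α + k ≠ 0 := fun h => hα k (eq_neg_of_add_eq_zero_left h)
    calc Real.Gamma (α + (k + 1 : ℕ))
        = (α + k) * Real.Gamma (α + k) := by
          rw [Nat.cast_succ, ← add_assoc, Real.Gamma_add_one hk]
      _ = (ascPochhammer ℝ (k + 1)).eval α * Real.Gamma α := by
          rw [ih, ascPochhammer_succ_eval]
          ring

theorem rpow_sub_one_mul_exp_neg_mul_pow (α : ℝ) (k : ℕ) {l : ℝ} (hl : l ≠ 0) :
    l ^ (α - 1) * Real.exp (-l) * l ^ k = Real.exp (-l) * l ^ (α + k - 1) := by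
  rw [add_sub_right_comm, Real.rpow_add_natCast hl]
  ring

theorem integrableOn_rpow_sub_one_mul_exp_neg_mul_pow {α : ℝ} {k : ℕ} (h : 0 < α + k) :
    IntegrableOn (fun l : ℝ => l ^ (α - 1) * Real.exp (-l) * l ^ k) (Ioi 0) :=
  (Real.GammaIntegral_convergent h).congr_fun
    (fun _ hl => (rpow_sub_one_mul_exp_neg_mul_pow α k (ne_of_gt hl)).symm) measurableSet_Ioi

theorem integral_rpow_sub_one_mul_exp_neg_mul_pow {α : ℝ} {k : ℕ} (h : 0 < α + k) :
    ∫ l in Ioi (0 : ℝ), l ^ (α - 1) * Real.exp (-l) * l ^ k = Real.Gamma (α + k) := by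
  rw [Real.Gamma_eq_integral h]
  exact setIntegral_congr_fun measurableSet_Ioi
    fun _ hl => rpow_sub_one_mul_exp_neg_mul_pow α k (ne_of_gt hl)

theorem integral_rpow_sub_one_mul_exp_neg_mul_sum {α : ℝ} {s : Finset ℕ}
    (hs : ∀ k ∈ s, 0 < α + k) (c : ℕ → ℝ) :
    ∫ l in Ioi (0 : ℝ), l ^ (α - 1) * Real.exp (-l) * ∑ k ∈ s, c k * l ^ k =
      ∑ k ∈ s, c k * Real.Gamma (α + k) := by
  simp only [Finset.mul_sum, mul_left_comm _ (c _)]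
  rw [integral_finsetSum s fun k hk =>
    (integrableOn_rpow_sub_one_mul_exp_neg_mul_pow (hs k hk)).const_mul (c k)]
  refine Finset.sum_congr rfl fun k hk => ?_
  rw [integral_const_mul, integral_rpow_sub_one_mul_exp_neg_mul_pow (hs k hk)]

theorem stmt5 (α : ℝ) (hα : 0 < α) (n : ℕ) (x : ℝ) :
    geomPoly α n x =
      (1 / Real.Gamma α) *
        ∫ l in Set.Ioi (0 : ℝ), l ^ (α - 1) * Real.exp (-l) * expPoly n (x * l) := by
  have hΓ : Real.Gamma α ≠ 0 := (Real.Gamma_pos_of_pos hα).ne'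
  have hα_ne (m : ℕ) : α ≠ -m := ((neg_nonpos.mpr m.cast_nonneg).trans_lt hα).ne'
  have hα_add (k : ℕ) : 0 < α + k := add_pos_of_pos_of_nonneg hα k.cast_nonneg
  have integral_eq : ∫ l in Ioi (0 : ℝ), l ^ (α - 1) * Real.exp (-l) * expPoly n (x * l) =
      geomPoly α n x * Real.Gamma α := calc
    _ = ∫ l in Ioi (0 : ℝ), l ^ (α - 1) * Real.exp (-l) *
          ∑ k ∈ Finset.range (n + 1), (stirling2 n k : ℝ) * x ^ k * l ^ k := by
      simp only [expPoly, mul_pow, mul_assoc]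
    _ = ∑ k ∈ Finset.range (n + 1), (stirling2 n k : ℝ) * x ^ k * Real.Gamma (α + k) :=
      integral_rpow_sub_one_mul_exp_neg_mul_sum (fun k _ => hα_add k) _
    _ = geomPoly α n x * Real.Gamma α := by
      simp only [gamma_add_natCast hα_ne, geomPoly_eq_sum_ascPochhammer, Finset.sum_mul, mul_assoc]
  rw [integral_eq, one_div_mul_eq_div, mul_div_cancel_right₀ _ hΓ]
end
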